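/- Let α be a partition with all parts at least 2, ℓ(α) ≥ 3, and overlapping partition p = (2,1,0,…,0) (that is, p_1 = 2, p_2 = 1, and p_i = 0 for i ≥ 3). Then R_α^p has full Schur support, i.e. [R_α^p] = [α, (|α|−2, 2)], if and only if α_1 < Σ_{q=2}^{ℓ(α)} α_q. -/

import Mathlib

namespace RibbonSupport

/-- A partition: a weakly decreasing list of positive integers. -/
def IsPartition (a : List ℕ) : Prop := a.Pairwise (· ≥ ·) ∧ ∀ x ∈ a, 0 < x

/-- All parts of the list are at least `m`. -/
def PartsGE (a : List ℕ) (m : ℕ) : Prop := ∀ x ∈ a, m ≤ x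

/-- Dominance order `lam ⪯ mu` on partitions of the same size. -/
def DomLE (lam mu : List ℕ) : Prop :=
  lam.sum = mu.sum ∧ ∀ i, (lam.take i).sum ≤ (mu.take i).sum

/-- The number of nonzero parts. -/
def lenp (p : List ℕ) : ℕ := p.countP (fun x => decide (x ≠ 0))

/-- `p` is an overlapping partition for the monotone ribbon with row lengths `a`:
`p` has the same length as `a`, its last entry is `0`, and consecutive entries
decrease by `0` or `1`. -/
def IsOverlapSeq (a p : List ℕ) : Prop :=
  p.length = a.length ∧ p.getD (a.length - 1) 0 = 0 ∧
    ∀ i, i + 1 < a.length →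
      p.getD i 0 = p.getD (i + 1) 0 ∨ p.getD i 0 = p.getD (i + 1) 0 + 1

/-- Rows `i` and `i+1` (0-based, top to bottom) of `R_a^p` overlap
(share exactly one column) exactly when `p_i = p_{i+1} + 1`. -/
def ovOf (p : List ℕ) : ℕ → Bool := fun i => decide (p.getD i 0 = p.getD (i + 1) 0 + 1)

def rowOffset (a : List ℕ) (i : ℕ) : ℕ := (a.take i).sum

/-- `w` is the reading word (rows right-to-left, top to bottom) of a semistandard filling of
the ribbon with row lengths `a` (top to bottom) in which consecutive rows `i`, `i+1` share
exactly one column when `ov i = true` and no column otherwise.  Semistandardness amounts to: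
within each row block the word is weakly decreasing (rows weakly increase left to right), and
at each overlapping gap the word strictly increases (columns strictly increase downwards). -/
def IsRibbonWord (a : List ℕ) (ov : ℕ → Bool) (w : List ℕ) : Prop :=
  w.length = a.sum ∧
  (∀ i j, i < a.length → j + 1 < a.getD i 0 →
    w.getD (rowOffset a i + j + 1) 0 ≤ w.getD (rowOffset a i + j) 0) ∧
  (∀ i, i + 1 < a.length → ov i = true →
    w.getD (rowOffset a (i + 1) - 1) 0 < w.getD (rowOffset a (i + 1)) 0)

/-- Yamanouchi (lattice) word: each prefix has at least as many letters `j` as `j+1`. -/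
def IsYam (w : List ℕ) : Prop := ∀ k j, (w.take k).count (j + 2) ≤ (w.take k).count (j + 1)

/-- The word `w` has content `nu` (and only positive letters). -/
def HasContent (w : List ℕ) (nu : List ℕ) : Prop :=
  (∀ j, w.count (j + 1) = nu.getD j 0) ∧ w.count 0 = 0

/-- There is an LR filling of the ribbon `(a, ov)` with content `nu`. -/
def InSupportOv (a : List ℕ) (ov : ℕ → Bool) (nu : List ℕ) : Prop :=
  ∃ w : List ℕ, IsRibbonWord a ov w ∧ IsYam w ∧ HasContent w nu

/-- `nu` is in the Schur support of the monotone ribbon `R_a^p`. -/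
def InSupport (a p nu : List ℕ) : Prop := InSupportOv a (ovOf p) nu

/-- `nu` is in the Schur support of the connected ribbon `R_a`. -/
def InSupportConn (a nu : List ℕ) : Prop := InSupportOv a (fun _ => true) nu

/-- `nu` belongs to the Schur interval `[a, (|a| - p₁, p₁)]` in dominance order. -/
def InInterval (a p nu : List ℕ) : Prop :=
  DomLE a nu ∧ DomLE nu [a.sum - p.getD 0 0, p.getD 0 0]

/-- The Schur support of `R_a^p`, as a set of partitions. -/
def SupportSet (a p : List ℕ) : Set (List ℕ) := {nu | IsPartition nu ∧ InSupport a p nu}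

/-- The Schur interval of `R_a^p`, as a set of partitions. -/
def IntervalSet (a p : List ℕ) : Set (List ℕ) := {nu | IsPartition nu ∧ InInterval a p nu}

/-- `R_a^p` has full Schur support. -/
def FullSupport (a p : List ℕ) : Prop := SupportSet a p = IntervalSet a p

/-- The Schur support of the connected ribbon `R_a`, as a set of partitions. -/
def SupportSetConn (a : List ℕ) : Set (List ℕ) := {nu | IsPartition nu ∧ InSupportConn a nu}

/-- `ϱ_i` (1-based `i`): `Σ_{q=i+1}^{ℓ(a)} a_q − p_{i+1} + 1`. -/
def rho (a p : List ℕ) (i : ℕ) : ℕ := (a.drop i).sum + 1 - p.getD i 0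

/-- Entry `j` (1-based) of the `i`-witness vector: `[ϱ_i − a_j]₊`. -/
def wit (a p : List ℕ) (i j : ℕ) : ℕ := rho a p i - a.getD (j - 1) 0

/-- Size of the `i`-witness vector. -/
def witSize (a p : List ℕ) (i : ℕ) : ℕ := ∑ j ∈ Finset.Icc 1 i, wit a p i j

/-! ### Tableaux -/

/-- Cells (0-based `(row, column)`) of the Young diagram of `lam`. -/
def cells (lam : List ℕ) : Finset (ℕ × ℕ) :=
  (Finset.range lam.length ×ˢ Finset.range (lam.sum + 1)).filter
    (fun x => x.2 < lam.getD x.1 0)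

/-- `T` is a semistandard Young tableau of shape `lam` and content `al`
(normalized to vanish off the diagram). -/
def IsTab (lam al : List ℕ) (T : ℕ × ℕ → ℕ) : Prop :=
  (∀ x, x ∉ cells lam → T x = 0) ∧
  (∀ x ∈ cells lam, 1 ≤ T x) ∧
  (∀ i c, (i, c + 1) ∈ cells lam → T (i, c) ≤ T (i, c + 1)) ∧
  (∀ i c, (i + 1, c) ∈ cells lam → T (i, c) < T (i + 1, c)) ∧
  (∀ k, ((cells lam).filter (fun x => T x = k + 1)).card = al.getD k 0)

/-- Standardization of a tableau: entries are renumbered `1, …, N` in increasing order of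
value, entries of equal value being numbered from southwest to northeast (by column). -/
def stdz (lam : List ℕ) (T : ℕ × ℕ → ℕ) : ℕ × ℕ → ℕ := fun x =>
  if x ∈ cells lam then
    ((cells lam).filter (fun y => T y < T x ∨ (T y = T x ∧ y.2 < x.2))).card + 1
  else 0

/-- `n` is a descent of the standard tableau `U`: the entry `n+1` lies in a strictly
lower row than the entry `n`. -/
def IsDescent (lam : List ℕ) (U : ℕ × ℕ → ℕ) (n : ℕ) : Prop :=
  ∃ x ∈ cells lam, ∃ y ∈ cells lam, U x = n ∧ U y = n + 1 ∧ x.1 < y.1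

/-- `S(al)`: the set of proper partial sums of the composition `al`. -/
def Sset (al : List ℕ) : Set ℕ := {n | ∃ k, 0 < k ∧ k < al.length ∧ n = (al.take k).sum}

/-- `s ∈ D(T)`: some entry `s+1` of `T` lies in a strictly lower row than some entry `s`. -/
def TabDescent (lam : List ℕ) (T : ℕ × ℕ → ℕ) (s : ℕ) : Prop :=
  ∃ x ∈ cells lam, ∃ y ∈ cells lam, T x = s ∧ T y = s + 1 ∧ x.1 < y.1

/-- The word `w_{T̂}` of `T`: its `u`-th letter (1-based) is the 1-based row index of the
entry `u` of the standardization `T̂` of `T`. -/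
def wordOf (lam : List ℕ) (T : ℕ × ℕ → ℕ) : List ℕ :=
  (List.range lam.sum).map fun n =>
    ∑ x ∈ (cells lam).filter (fun x => stdz lam T x = n + 1), (x.1 + 1)

/-- `j ∈ {2, …, ℓ(al)}` is a critical number of `T ∈ Tab(lam, al)`:
`w_{α_1+⋯+α_{j-1}} = w_{α_1+⋯+α_{j-1}+1}` in the word of `T`. -/
def CriticalNum (lam al : List ℕ) (T : ℕ × ℕ → ℕ) (j : ℕ) : Prop :=
  2 ≤ j ∧ j ≤ al.length ∧
    (wordOf lam T).getD ((al.take (j - 1)).sum - 1) 0 =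
      (wordOf lam T).getD ((al.take (j - 1)).sum) 0

/-- `j ∈ {2, …, ℓ(al)}` is a negligible critical number of `T`:
`w_{α_1+⋯+α_{j-1}} > w_{α_1+⋯+α_{j-1}+1}` in the word of `T`. -/
def NegligibleNum (lam al : List ℕ) (T : ℕ × ℕ → ℕ) (j : ℕ) : Prop :=
  2 ≤ j ∧ j ≤ al.length ∧
    (wordOf lam T).getD ((al.take (j - 1)).sum) 0 <
      (wordOf lam T).getD ((al.take (j - 1)).sum - 1) 0

/-- The overlapping partition of the ribbon encoded by its gap pattern `b`
(`b j = true` iff rows `j` and `j+1`, 0-based, overlap). -/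
def povOf (b : List Bool) : List ℕ :=
  (List.range (b.length + 1)).map fun i => (b.drop i).count true

/-! ### Connected ribbons with rows in arbitrary order -/

/-- Starting column (0-based) of row `i` of the connected ribbon with row lengths `b`. -/
def startConn (b : List ℕ) (i : ℕ) : ℕ := (b.drop (i + 1)).sum + (i + 1) - b.length

/-- Number of columns of the connected ribbon with row lengths `b`. -/
def ncols (b : List ℕ) : ℕ := b.sum + 1 - b.length

/-- Length of column `c` of the connected ribbon with row lengths `b`. -/
def colLen (b : List ℕ) (c : ℕ) : ℕ :=
  ((Finset.range b.length).filter
    (fun i => startConn b i ≤ c ∧ c < startConn b i + b.getD i 0)).card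

/-- Deletion rank of row `j`: the number of rows deleted strictly before row `j` when one
repeatedly deletes a longest remaining row in highest (most northern) position. -/
def delRank (g : List ℕ) (j : ℕ) : ℕ :=
  ((Finset.range g.length).filter
    (fun j' => g.getD j 0 < g.getD j' 0 ∨ (g.getD j' 0 = g.getD j 0 ∧ j' < j))).card

/-- The overlapping partition of the connected ribbon with row lengths `g`:
its `(d+1)`-st entry is the number of length-two columns of the ribbon remaining
after deleting `d` rows as above, i.e. the number of adjacent pairs of surviving rows. -/
def ppiList (g : List ℕ) : List ℕ :=
  (List.range g.length).map fun d =>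
    ((Finset.range (g.length - 1)).filter
      (fun j => d ≤ delRank g j ∧ d ≤ delRank g (j + 1))).card


theorem rowOffset_succ (a : List ℕ) (i : ℕ) :
    rowOffset a (i + 1) = rowOffset a i + a.getD i 0 := by
  unfold rowOffset
  by_cases h : i < a.length
  · rw [List.sum_take_succ _ _ h]; simp [List.getD, h]
  · push Not at h
    simp [List.getD, h, List.take_of_length_le h, List.take_of_length_le (Nat.le_succ_of_le h)]

theorem rowOffset_mono (a : List ℕ) : Monotone (rowOffset a) :=
  monotone_nat_of_le_succ fun i => by rw [rowOffset_succ]; omega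

theorem rowOffset_le_sum (a : List ℕ) (i : ℕ) : rowOffset a i ≤ a.sum := by
  unfold rowOffset
  conv_rhs => rw [← List.take_append_drop i a, List.sum_append]
  omega

theorem rowOffset_append (b c : List ℕ) (i : ℕ) (h : i ≤ b.length) :
    rowOffset (b ++ c) i = rowOffset b i := by
  unfold rowOffset; rw [List.take_append_of_le_length h]

theorem rowOffset_length (b : List ℕ) : rowOffset b b.length = b.sum := by
  unfold rowOffset; simp

/-- Partial data: `w` is an LR word of the ribbon with content function `f`. -/
def Supp (a : List ℕ) (ov : ℕ → Bool) (w : List ℕ) (f : ℕ → ℕ) : Prop :=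
  IsRibbonWord a ov w ∧ IsYam w ∧ (∀ j, w.count (j + 1) = f j) ∧ w.count 0 = 0

theorem ribbon_append {b : List ℕ} {ov : ℕ → Bool} {w v : List ℕ}
    (hw : IsRibbonWord b ov w) (hv : v.Pairwise (· ≥ ·))
    (hov : b ≠ [] → ov (b.length - 1) = true →
      0 < b.sum ∧ w.getD (b.sum - 1) 0 < v.getD 0 0) :
    IsRibbonWord (b ++ [v.length]) ov (w ++ v) := by
  obtain ⟨h1, h2, h3⟩ := hw
  refine ⟨by simp [h1], ?_, ?_⟩
  · intro i j hi hj
    simp only [List.length_append, List.length_singleton] at hi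
    rw [rowOffset_append _ _ _ (by omega)]
    by_cases hib : i < b.length
    · rw [List.getD_append _ _ _ _ hib] at hj
      have e1 := rowOffset_succ b i
      have e2 := rowOffset_le_sum b (i + 1)
      rw [List.getD_append _ _ _ _ (by omega), List.getD_append _ _ _ _ (by omega)]
      exact h2 i j hib hj
    · have : i = b.length := by omega
      subst this
      rw [List.getD_append_right _ _ _ _ (by omega)] at hj
      simp at hj
      rw [rowOffset_length, List.getD_append_right _ _ _ _ (by omega),
        List.getD_append_right _ _ _ _ (by omega), h1]
      have e1 : b.sum + j + 1 - b.sum = j + 1 := by omega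
      have e2 : b.sum + j - b.sum = j := by omega
      rw [e1, e2, List.getD_eq_getElem _ _ hj, List.getD_eq_getElem _ _ (by omega)]
      exact List.pairwise_iff_getElem.1 hv _ _ _ _ (by omega)
  · intro i hi ho
    simp only [List.length_append, List.length_singleton] at hi
    rw [rowOffset_append _ _ _ (by omega)]
    by_cases hib : i + 1 < b.length
    · have e1 := rowOffset_succ b (i + 1)
      have e2 := rowOffset_le_sum b (i + 2)
      by_cases hz : rowOffset b (i + 1) < b.sum
      · rw [List.getD_append _ _ _ _ (by omega), List.getD_append _ _ _ _ (by omega)]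
        exact h3 i hib ho
      · have := h3 i hib ho
        rw [List.getD_eq_default (l := w) (n := rowOffset b (i + 1)) (hn := by omega)] at this
        omega
    · have hl : i + 1 = b.length := by omega
      have hne : b ≠ [] := by rintro rfl; simp at hl
      have : i = b.length - 1 := by omega
      obtain ⟨p, q⟩ := hov hne (this ▸ ho)
      rw [hl, rowOffset_length, List.getD_append _ _ _ _ (by omega),
        List.getD_append_right _ _ _ _ (by omega), h1]
      simpa using q

theorem supp_append {b : List ℕ} {ov : ℕ → Bool} {w v : List ℕ} {g f : ℕ → ℕ} {c : ℕ}
    (hw : Supp b ov w g) (hv : v.Pairwise (· ≥ ·)) (hc : v.length = c)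
    (hv0 : v.count 0 = 0) (hcnt : ∀ j, g j + v.count (j + 1) = f j)
    (hil : ∀ j, f (j + 1) ≤ g j)
    (hov : b ≠ [] → ov (b.length - 1) = true →
      0 < b.sum ∧ w.getD (b.sum - 1) 0 < v.getD 0 0) :
    Supp (b ++ [c]) ov (w ++ v) f := by
  obtain ⟨h1, h2, h3, h4⟩ := hw
  subst hc
  refine ⟨ribbon_append h1 hv hov, ?_, ?_, ?_⟩
  · intro k j
    rw [List.take_append, List.count_append, List.count_append]
    by_cases hk : k ≤ w.length
    · have : k - w.length = 0 := by omega
      simpa [this] using h2 k j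
    · rw [List.take_of_length_le (by omega)]
      have e1 : (v.take (k - w.length)).count (j + 2) ≤ v.count (j + 1 + 1) :=
        (List.take_sublist _ _).count_le _
      have := hcnt (j + 1)
      have := hil j
      have e2 : w.count (j + 2) = g (j + 1) := h3 (j + 1)
      rw [e2, h3 j]
      omega
  · intro j; rw [List.count_append, h3, hcnt]
  · rw [List.count_append, h4, hv0]

/-- weakly decreasing word with `d j` letters `j+1` for `j < L`. -/
def strip (d : ℕ → ℕ) : ℕ → List ℕ
  | 0 => []
  | L + 1 => List.replicate (d L) (L + 1) ++ strip d L

theorem strip_mem (d : ℕ → ℕ) (L x : ℕ) (h : x ∈ strip d L) : 1 ≤ x ∧ x ≤ L := by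
  induction L with
  | zero => simp [strip] at h
  | succ L ih =>
    simp only [strip, List.mem_append, List.mem_replicate] at h
    rcases h with h | h
    · omega
    · have := ih h; omega

theorem strip_pairwise (d : ℕ → ℕ) (L : ℕ) : (strip d L).Pairwise (· ≥ ·) := by
  induction L with
  | zero => simp [strip]
  | succ L ih =>
    simp only [strip]
    rw [List.pairwise_append]
    refine ⟨by simp [List.pairwise_replicate], ih, ?_⟩
    intro x hx y hy
    have := strip_mem d L y hy
    have := (List.mem_replicate.1 hx).2
    omega

theorem strip_count (d : ℕ → ℕ) (L j : ℕ) :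
    (strip d L).count (j + 1) = if j < L then d j else 0 := by
  induction L with
  | zero => simp [strip]
  | succ L ih =>
    simp only [strip, List.count_append, ih, List.count_replicate]
    by_cases h : j = L
    · subst h; simp
    · have : ¬ (L = j) := fun e => h e.symm
      simp [this]
      split_ifs <;> omega

theorem strip_count_zero (d : ℕ → ℕ) (L : ℕ) : (strip d L).count 0 = 0 := by
  rw [List.count_eq_zero]
  intro h
  have := strip_mem d L 0 h
  omega

theorem strip_length (d : ℕ → ℕ) (L : ℕ) :
    (strip d L).length = ∑ j ∈ Finset.range L, d j := by
  induction L with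
  | zero => simp [strip]
  | succ L ih => simp [strip, ih, Finset.sum_range_succ]; omega

/-- The condition on contents characterising the support. -/
structure Good (a : List ℕ) (f : ℕ → ℕ) : Prop where
  anti : ∀ i, f (i + 1) ≤ f i
  zero : ∀ j, a.length ≤ j → f j = 0
  tot : ∑ j ∈ Finset.range a.length, f j = a.sum
  dom : ∀ i, i ≤ a.length → (a.take i).sum ≤ ∑ j ∈ Finset.range i, f j
  two : f 0 + 2 ≤ a.sum
  ne : a.getD 0 0 < f 0 ∨ 1 ≤ f 2

def f3 (x y z : ℕ) : ℕ → ℕ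
  | 0 => x
  | 1 => y
  | 2 => z
  | _ => 0

theorem f3_sum (x y z k : ℕ) : ∑ j ∈ Finset.range (k + 3), f3 x y z j = x + y + z := by
  induction k with
  | zero => simp [Finset.sum_range_succ, f3]
  | succ k ih => rw [show k + 1 + 3 = (k + 3) + 1 by ring, Finset.sum_range_succ, ih]; simp [f3]

theorem good_f3 (a b d : ℕ) (r : List ℕ) (x y z : ℕ) (h1 : y ≤ x) (h2 : z ≤ y)
    (hs : x + y + z = a + b + d + r.sum) (h3 : a ≤ x) (h4 : a + b ≤ x + y)
    (h5 : 2 ≤ y + z) (h6 : a < x ∨ 1 ≤ z) : Good (a :: b :: d :: r) (f3 x y z) := by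
  refine ⟨?_, ?_, ?_, ?_, ?_, ?_⟩
  · rintro (_ | _ | _ | i) <;> simp [f3, h1, h2]
  · rintro (_ | _ | _ | j) hj <;> simp [f3] at *
  · simp only [List.length_cons]
    rw [f3_sum]; simp; omega
  · rintro (_ | _ | _ | i) hi
    · simp
    · simpa [f3] using h3
    · simpa [f3, Finset.sum_range_succ] using h4
    · rw [f3_sum]
      have := rowOffset_le_sum (a :: b :: d :: r) (i + 3)
      simp only [rowOffset] at this
      simp at this ⊢
      omega
  · simp [f3]; omega
  · simpa [f3] using h6

def gr (f : ℕ → ℕ) (c : ℕ) : ℕ → ℕ := fun i => (f i - c) + min c (f (i + 1))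

theorem gr_sum (f : ℕ → ℕ) (c : ℕ) (h : ∀ i, f (i + 1) ≤ f i) (i : ℕ) :
    ∑ j ∈ Finset.range i, gr f c j + min c (f 0) = ∑ j ∈ Finset.range i, f j + min c (f i) := by
  induction i with
  | zero => simp
  | succ i ih =>
    rw [Finset.sum_range_succ, Finset.sum_range_succ]
    have : gr f c i = (f i - c) + min c (f (i + 1)) := rfl
    have := h i
    omega

theorem step_exists (a b d : ℕ) (r : List ℕ) (c : ℕ) (f : ℕ → ℕ) (hc : 2 ≤ c)
    (hge : ∀ x ∈ a :: b :: d :: r, c ≤ x)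
    (hf : Good ((a :: b :: d :: r) ++ [c]) f) :
    ∃ g, Good (a :: b :: d :: r) g ∧ ∀ i, f (i + 1) ≤ g i ∧ g i ≤ f i := by
  obtain ⟨k1, k2, k3, k4, k5, k6⟩ := hf
  have ha : c ≤ a := hge a (by simp)
  have hb : c ≤ b := hge b (by simp)
  have hd : c ≤ d := hge d (by simp)
  have hf0 : a ≤ f 0 := by simpa using k4 1 (by simp)
  have il : ∀ i, f (i + 1) ≤ gr f c i ∧ gr f c i ≤ f i := by
    intro i
    have := k1 i
    simp only [gr]
    omega
  have hsum := gr_sum f c k1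
  have hm : min c (f 0) = c := by omega
  have k5' : f 0 + 2 ≤ a + b + d + r.sum + c := by simp at k5; omega
  have k6' : a < f 0 ∨ 1 ≤ f 2 := by simpa using k6
  have tz : ∀ j, (a :: b :: d :: r).length ≤ j → gr f c j = 0 := by
    intro j hj
    have := (il j)
    have e1 : f (j + 1) = 0 := k2 _ (by simp at hj ⊢; omega)
    have := k1 j
    -- f j ≤ c
    have hlast : f (a :: b :: d :: r).length ≤ c := by
      have t := k4 (a :: b :: d :: r).length (by simp)
      have t2 := k3
      rw [List.length_append, List.length_singleton, Finset.sum_range_succ, List.sum_append] at t2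
      rw [List.take_left] at t
      simp only [List.sum_singleton] at t2
      omega
    simp only [gr, e1]
    rcases Nat.eq_or_lt_of_le hj with h | h
    · rw [← h]; omega
    · have : f j = 0 := k2 j (by simp at h ⊢; omega)
      omega
  have htot : ∑ j ∈ Finset.range (a :: b :: d :: r).length, gr f c j
      = (a :: b :: d :: r).sum := by
    have t2 := k3
    have t3 := hsum ((a :: b :: d :: r).length + 1)
    have e : f ((a :: b :: d :: r).length + 1) = 0 := k2 _ (by simp)
    rw [Finset.sum_range_succ, tz _ le_rfl, e, hm] at t3
    rw [List.length_append, List.length_singleton, List.sum_append, List.sum_singleton] at t2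
    omega
  have hdom : ∀ i, i ≤ (a :: b :: d :: r).length →
      ((a :: b :: d :: r).take i).sum ≤ ∑ j ∈ Finset.range i, gr f c j := by
    intro i hi
    rcases Nat.eq_or_lt_of_le hi with h | h
    · rw [h, htot, List.take_length]
    · have t := hsum i
      have t1 := k4 i (by simp at hi ⊢; omega)
      have t2 := k4 (i + 1) (by simp at h ⊢; omega)
      rw [List.take_append_of_le_length hi] at t1
      rw [List.take_append_of_le_length h, List.sum_take_succ _ _ h, Finset.sum_range_succ] at t2
      have := hge _ (List.getElem_mem h)
      omega
  have g3 : gr f c 0 + gr f c 1 + gr f c 2 ≤ a + b + d + r.sum := by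
    have : ∑ j ∈ Finset.range 3, gr f c j
        ≤ ∑ j ∈ Finset.range (a :: b :: d :: r).length, gr f c j :=
      Finset.sum_le_sum_of_subset (Finset.range_mono (by simp))
    rw [htot] at this
    simp [Finset.sum_range_succ] at this
    omega
  have ganti : ∀ i, gr f c (i + 1) ≤ gr f c i := fun i => (il (i + 1)).2.trans (il i).1
  have hg0 : a ≤ gr f c 0 := by simpa using hdom 1 (by simp)
  have i0 := il 0
  have i1 := il 1
  have i2 := il 2
  have a0 := ganti 0
  have a1 := ganti 1
  simp only [zero_add, Nat.reduceAdd] at i0 i1 i2 a0 a1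
  have zf : f 3 = 0 → (∀ j, 3 ≤ j → f j = 0) := by
    intro h j hj
    have := (antitone_nat_of_succ_le k1) hj
    omega
  have tf : f 3 = 0 → f 0 + f 1 + f 2 = a + b + d + r.sum + c := by
    intro h
    have t2 := k3
    have : ∑ j ∈ Finset.range ((a :: b :: d :: r) ++ [c]).length, f j
        = ∑ j ∈ Finset.range 3, f j := by
      symm
      apply Finset.sum_subset (Finset.range_mono (by simp))
      intro j _ hj
      exact zf h j (by simpa using hj)
    rw [this] at t2
    simp [Finset.sum_range_succ] at t2
    omega
  have ilf : ∀ x y z, f 3 = 0 → f 1 ≤ x → x ≤ f 0 → f 2 ≤ y → y ≤ f 1 → z ≤ f 2 →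
      ∀ i, f (i + 1) ≤ f3 x y z i ∧ f3 x y z i ≤ f i := by
    intro x y z h h1 h2 h3 h4 h5 i
    match i with
    | 0 => exact ⟨h1, h2⟩
    | 1 => exact ⟨h3, h4⟩
    | 2 => exact ⟨by simp [h], h5⟩
    | i + 3 => exact ⟨by rw [zf h _ (by omega)]; simp, by simp [f3]⟩
  by_cases hB : a + b + d + r.sum ≤ gr f c 0 + 1
  · have h3 : f 3 = 0 := by omega
    have := tf h3
    by_cases hf1 : 2 ≤ f 1
    · refine ⟨f3 (a + b + d + r.sum - 2) 2 0, good_f3 _ _ _ _ _ _ _ ?_ ?_ ?_ ?_ ?_ ?_ ?_,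
        ilf _ _ _ h3 ?_ ?_ ?_ ?_ ?_⟩ <;> omega
    · refine ⟨f3 (a + b + d + r.sum - 2) 1 1, good_f3 _ _ _ _ _ _ _ ?_ ?_ ?_ ?_ ?_ ?_ ?_,
        ilf _ _ _ h3 ?_ ?_ ?_ ?_ ?_⟩ <;> omega
  by_cases hA : a < gr f c 0 ∨ 1 ≤ gr f c 2
  · exact ⟨gr f c, ⟨ganti, tz, htot, hdom, by simp; omega, by simpa using hA⟩, il⟩
  · have h3 : f 3 = 0 := by omega
    have := tf h3
    have e0 : gr f c 0 = (f 0 - c) + min c (f 1) := rfl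
    have e1 : gr f c 1 = (f 1 - c) + min c (f 2) := rfl
    have e2 : gr f c 2 = (f 2 - c) + min c (f 3) := rfl
    have hk := k1 0
    have hk1 := k1 1
    simp only [zero_add, Nat.reduceAdd] at hk hk1
    refine ⟨f3 a (b + d + r.sum - 1) 1, good_f3 _ _ _ _ _ _ _ ?_ ?_ ?_ ?_ ?_ ?_ ?_,
        ilf _ _ _ h3 ?_ ?_ ?_ ?_ ?_⟩ <;> omega

def ov2 : ℕ → Bool := fun i => decide (i < 2)

theorem base_word (a b c : ℕ) (hab : b ≤ a) (hbc : c ≤ b) (hc : 2 ≤ c) (f : ℕ → ℕ)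
    (hf : Good [a, b, c] f) : ∃ w, Supp [a, b, c] ov2 w f := by
  obtain ⟨k1, k2, k3, k4, k5, k6⟩ := hf
  have d1 := k4 1 (by simp)
  have d2 := k4 2 (by simp)
  have z3 : f 3 = 0 := k2 3 (by simp)
  have zf : ∀ j, f (j + 3) = 0 := fun j => k2 _ (by simp)
  have a0 := k1 0
  have a1 := k1 1
  simp [Finset.sum_range_succ] at d1 d2 k3 k5 k6 a0 a1
  obtain ⟨x, hx1, hx2, hx3, hx4, hx5, hx6, hx7⟩ : ∃ x, x + 1 ≤ b ∧ a + x ≤ f 0 ∧ b ≤ f 1 + x ∧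
      f 1 ≤ a + x ∧ f 2 + x ≤ b ∧ (x = 0 → 1 ≤ f 2) ∧ (f 2 = 0 → b < f 1 + x) := by
    by_cases h : 1 ≤ f 2
    · exact ⟨max (b - f 1) (f 1 - a), by omega, by omega, by omega, by omega, by omega,
        by omega, by omega⟩
    · exact ⟨max 1 (max (b + 1 - f 1) (f 1 - a)), by omega, by omega, by omega, by omega,
        by omega, by omega, by omega⟩
  have s0 : Supp [] ov2 [] (fun _ => 0) := by
    refine ⟨⟨by simp, by simp, by simp⟩, ?_, by simp, by simp⟩
    intro k j; simp
  have s1 : Supp ([] ++ [a]) ov2 ([] ++ List.replicate a 1) (f3 a 0 0) := by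
    refine supp_append s0 ?_ (by simp) ?_ ?_ ?_ (by simp)
    · simp [List.pairwise_replicate]
    · simp [List.count_replicate]
    · rintro (_ | _ | _ | j) <;> simp [f3, List.count_replicate]
    · rintro (_ | _ | _ | j) <;> simp [f3]
  have s2 : Supp ([a] ++ [b]) ov2
      (List.replicate a 1 ++ (List.replicate (b - x) 2 ++ List.replicate x 1))
      (f3 (a + x) (b - x) 0) := by
    refine supp_append s1 ?_ (by simp; omega) ?_ ?_ ?_ ?_
    · simp [List.pairwise_append, List.pairwise_replicate]
    · simp [List.count_replicate]
    · rintro (_ | _ | _ | j) <;> simp [f3, List.count_replicate]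
    · rintro (_ | _ | _ | j) <;> simp [f3]; omega
    · intro _ _
      simp only [List.sum_singleton]
      refine ⟨by omega, ?_⟩
      simp only [List.getD, List.getElem?_append, List.getElem?_replicate, List.length_replicate]
      rw [if_pos (by omega), if_pos (by omega), if_pos (by omega)]
      simp
  have s3 : Supp ([a, b] ++ [c]) ov2
      ((List.replicate a 1 ++ (List.replicate (b - x) 2 ++ List.replicate x 1)) ++
        (List.replicate (f 2) 3 ++ (List.replicate (f 1 + x - b) 2 ++
          List.replicate (f 0 - a - x) 1))) f := by
    refine supp_append s2 ?_ (by simp; omega) ?_ ?_ ?_ ?_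
    · simp only [List.pairwise_append, List.pairwise_replicate, List.mem_append,
        List.mem_replicate]
      refine ⟨by simp, ⟨by simp, by simp, ?_⟩, ?_⟩
      · rintro u ⟨_, rfl⟩ v ⟨_, rfl⟩; simp
      · rintro u ⟨_, rfl⟩ v (⟨_, rfl⟩ | ⟨_, rfl⟩) <;> simp
    · simp [List.count_replicate]
    · rintro (_ | _ | _ | j) <;> simp [f3, List.count_replicate, zf] <;> omega
    · rintro (_ | _ | _ | j) <;> simp [f3, zf] <;> omega
    · intro _ _
      have e : [a, b].sum = a + b := by simp
      rw [e]
      refine ⟨by omega, ?_⟩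
      simp only [List.getD, List.getElem?_append, List.getElem?_replicate, List.length_replicate]
      rw [if_neg (by omega)]
      by_cases hx : x = 0
      · have := hx6 hx
        rw [if_pos (by omega), if_pos (by omega), if_pos (by omega), if_pos (by omega)]
        simp
      · rw [if_neg (by omega), if_pos (by omega)]
        by_cases h2 : f 2 = 0
        · have := hx7 h2
          rw [if_neg (by omega), if_pos (by omega), if_pos (by omega)]
          simp
        · rw [if_pos (by omega), if_pos (by omega)]
          simp
  exact ⟨_, s3⟩

theorem exists_word (n : ℕ) : ∀ (a : List ℕ), a.length = n + 3 → IsPartition a → PartsGE a 2 →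
    ∀ f, Good a f → ∃ w, Supp a ov2 w f := by
  induction n with
  | zero =>
    intro a hl hp h2 f hf
    match a, hl with
    | [a, b, c], _ =>
      have h := hp.1
      simp at h
      exact base_word a b c h.1.1 h.2 (h2 c (by simp)) f hf
  | succ n ih =>
    intro l hl hp h2 f hf
    obtain rfl | ⟨b, c, rfl⟩ := List.eq_nil_or_concat l
    · simp at hl
    simp only [List.concat_eq_append] at *
    have hl' : b.length = n + 3 := by simpa using hl
    have hp' : IsPartition b := ⟨(List.pairwise_append.1 hp.1).1, fun x hx => hp.2 x (by simp [hx])⟩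
    have h2' : PartsGE b 2 := fun x hx => h2 x (by simp [hx])
    have hge : ∀ x ∈ b, c ≤ x := fun x hx => (List.pairwise_append.1 hp.1).2.2 x hx c (by simp)
    have hc := h2 c (by simp)
    obtain ⟨g, hg, hil⟩ : ∃ g, Good b g ∧ ∀ i, f (i + 1) ≤ g i ∧ g i ≤ f i := by
      match b, hl' with
      | a :: b :: d :: r, _ => exact step_exists a b d r c f hc hge hf
    obtain ⟨w, hw⟩ := ih b hl' hp' h2' g hg
    refine ⟨_, supp_append (v := strip (fun j => f j - g j) (b.length + 1)) hw
      (strip_pairwise _ _) ?_ (strip_count_zero _ _) ?_ (fun j => (hil j).1) ?_⟩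
    · rw [strip_length, Finset.sum_tsub_distrib _ (fun i _ => (hil i).2)]
      have t := hf.tot
      have t' := hg.tot
      rw [List.length_append, List.length_singleton, List.sum_append, List.sum_singleton] at t
      rw [Finset.sum_range_succ (f := g), hg.zero _ le_rfl]
      omega
    · intro j
      rw [strip_count]
      have := hil j
      split_ifs with h
      · omega
      · have := hf.zero j (by simp; omega)
        omega
    · intro _ h
      simp [ov2] at h
      omega

theorem ovOf_eq (n : ℕ) : ovOf ([2, 1] ++ List.replicate n 0) = ov2 := by
  funext i
  rcases i with _ | _ | i
  · simp [ovOf, ov2]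
  · simp only [ovOf, ov2]
    rcases n with _ | n <;> simp [List.replicate_succ]
  · simp only [ovOf, ov2, List.getD, List.cons_append, List.nil_append]
    simp [List.getElem?_replicate]
    split_ifs <;> simp

/-- letters in the first `i` rows are at most `i` -/
theorem letters_le {a w : List ℕ} {ov : ℕ → Bool} (hr : IsRibbonWord a ov w) (hy : IsYam w)
    (i : ℕ) : ∀ k, k < rowOffset a i → w.getD k 0 ≤ i := by
  obtain ⟨h1, h2, h3⟩ := hr
  induction i with
  | zero => intro k hk; simp [rowOffset] at hk
  | succ i ih =>
    intro k hk
    by_cases hki : k < rowOffset a i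
    · exact (ih k hki).trans (Nat.le_succ i)
    rw [rowOffset_succ] at hk
    have hi : i < a.length := by
      by_contra h
      rw [List.getD_eq_default (hn := by omega)] at hk
      omega
    have hs := rowOffset_le_sum a (i + 1)
    rw [rowOffset_succ] at hs
    -- reduce to the first letter of the row
    have hfirst : w.getD (rowOffset a i) 0 ≤ i + 1 := by
      by_contra hcon
      push Not at hcon
      obtain ⟨y, hy'⟩ : ∃ y, w.getD (rowOffset a i) 0 = y + 2 :=
        ⟨w.getD (rowOffset a i) 0 - 2, by omega⟩
      have hlt : rowOffset a i < w.length := by omega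
      rw [List.getD_eq_getElem _ _ hlt] at hy'
      have := hy (rowOffset a i + 1) y
      rw [List.take_add_one, List.getElem?_eq_getElem hlt, hy'] at this
      simp only [Option.toList_some, List.count_append] at this
      simp at this
      have hpos : 0 < (w.take (rowOffset a i)).count (y + 1) := by omega
      rw [List.count_pos_iff] at hpos
      obtain ⟨k', hk', he⟩ := List.mem_iff_getElem.1 hpos
      rw [List.getElem_take] at he
      simp at hk'
      have := ih k' hk'.1
      rw [List.getD_eq_getElem _ _ hk'.2, he] at this
      rw [List.getD_eq_getElem _ _ hlt] at hcon
      omega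
    have hdec : ∀ j, j < a.getD i 0 → w.getD (rowOffset a i + j) 0 ≤ w.getD (rowOffset a i) 0 := by
      intro j
      induction j with
      | zero => intro _; exact le_rfl
      | succ j ihj =>
        intro hj
        exact (h2 i j hi hj).trans (ihj (by omega))
    have := hdec (k - rowOffset a i) (by omega)
    rw [show rowOffset a i + (k - rowOffset a i) = k by omega] at this
    omega

theorem length_eq_sum_count (w : List ℕ) (i : ℕ) (h : ∀ x ∈ w, 1 ≤ x ∧ x ≤ i) :
    w.length = ∑ j ∈ Finset.range i, w.count (j + 1) := by
  induction w with
  | nil => simp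
  | cons x w ih =>
    have hx := h x (by simp)
    have ih' := ih fun y hy => h y (by simp [hy])
    simp only [List.length_cons, List.count_cons, Finset.sum_add_distrib, ← ih']
    congr 1
    rw [Finset.sum_eq_single (x - 1)]
    · simp; omega
    · intro j _ hj
      simp; omega
    · intro hj; simp at hj; omega

theorem sum_take_getD (l : List ℕ) (i : ℕ) :
    (l.take i).sum = ∑ j ∈ Finset.range i, l.getD j 0 := by
  induction i with
  | zero => simp
  | succ i ih =>
    have := rowOffset_succ l i
    unfold rowOffset at this
    rw [this, ih, Finset.sum_range_succ]

theorem ne_zero_of {w : List ℕ} (h : w.count 0 = 0) {k : ℕ} (hk : k < w.length) :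
    1 ≤ w.getD k 0 := by
  rw [List.getD_eq_getElem _ _ hk]
  by_contra hc
  have : w[k] = 0 := by omega
  rw [List.count_eq_zero] at h
  exact h (this ▸ List.getElem_mem hk)

theorem take_letters {a w : List ℕ} {ov : ℕ → Bool} (hr : IsRibbonWord a ov w) (hy : IsYam w)
    (h0 : w.count 0 = 0) (i : ℕ) : ∀ x ∈ w.take (rowOffset a i), 1 ≤ x ∧ x ≤ i := by
  intro x hx
  obtain ⟨k, hk, he⟩ := List.mem_iff_getElem.1 hx
  rw [List.getElem_take] at he
  simp at hk
  have t1 := letters_le hr hy i k hk.1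
  have t2 := ne_zero_of h0 hk.2
  rw [List.getD_eq_getElem _ _ hk.2, he] at t1 t2
  exact ⟨t2, t1⟩

theorem dom_of_supp {a w nu : List ℕ} {ov : ℕ → Bool} (hr : IsRibbonWord a ov w) (hy : IsYam w)
    (hc : HasContent w nu) : DomLE a nu := by
  have key : ∀ i, (a.take i).sum ≤ (nu.take i).sum := by
    intro i
    have h := length_eq_sum_count _ i (take_letters hr hy hc.2 i)
    have hs := rowOffset_le_sum a i
    rw [List.length_take, hr.1, min_eq_left hs] at h
    unfold rowOffset at h
    rw [h, sum_take_getD nu]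
    apply Finset.sum_le_sum
    intro j _
    rw [← hc.1 j]
    exact (List.take_sublist _ _).count_le _
  refine ⟨?_, key⟩
  have hall : ∀ x ∈ w, 1 ≤ x ∧ x ≤ a.length := by
    have := take_letters hr hy hc.2 a.length
    rw [rowOffset_length, ← hr.1, List.take_length] at this
    exact this
  apply le_antisymm
  · have := key (max a.length nu.length)
    rwa [List.take_of_length_le (le_max_left _ _), List.take_of_length_le (le_max_right _ _)] at this
  · have h := length_eq_sum_count w (max a.length nu.length)
      (fun x hx => ⟨(hall x hx).1, (hall x hx).2.trans (le_max_left _ _)⟩)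
    rw [← hr.1, h, ← List.take_of_length_le (le_max_right a.length nu.length), sum_take_getD]
    simp [hc.1]

theorem count_one_le (w : List ℕ) (k l : ℕ) (hkl : k < l) (hl : l < w.length)
    (h1 : w.getD k 0 ≠ 1) (h2 : w.getD l 0 ≠ 1) : w.count 1 + 2 ≤ w.length := by
  have e1 : (w.take l).count 1 < (w.take l).length := by
    rw [List.count_lt_length_iff]
    refine ⟨w[k], ?_, ?_⟩
    · rw [List.mem_take_iff_getElem]; exact ⟨k, by omega, rfl⟩
    · rwa [List.getD_eq_getElem _ _ (by omega)] at h1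
  have e2 : (w.drop l).count 1 < (w.drop l).length := by
    rw [List.count_lt_length_iff]
    refine ⟨w[l], ?_, ?_⟩
    · rw [List.mem_drop_iff_getElem]; exact ⟨0, by omega, by simp⟩
    · rwa [List.getD_eq_getElem _ _ (by omega)] at h2
  have e3 : w.count 1 = (w.take l).count 1 + (w.drop l).count 1 := by
    rw [← List.count_append, List.take_append_drop]
  rw [List.length_take] at e1
  rw [List.length_drop] at e2
  omega

/-- Corollary `cor:full` (a): for a partition `a` with parts ≥ 2,
`ℓ(a) ≥ 3` and overlapping partition `p = (2,1,0,…,0)`, the ribbon `R_a^p` has full Schur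
support `[a, (|a|−2, 2)]` iff `a₁ < Σ_{q=2}^{ℓ(a)} a_q`. -/
theorem full_support_overlap_two_one
    (a : List ℕ) (ha : IsPartition a) (h2 : PartsGE a 2) (h3 : 3 ≤ a.length) :
    FullSupport a ([2, 1] ++ List.replicate (a.length - 2) 0) ↔
      a.getD 0 0 < (a.drop 1).sum := by
  match a, h3 with
  | a :: b :: c :: r, _ =>
  have ha2 : 2 ≤ a := h2 a (by simp)
  have hb2 : 2 ≤ b := h2 b (by simp)
  have hc2 : 2 ≤ c := h2 c (by simp)
  have hro1 : rowOffset (a :: b :: c :: r) 1 = a := by simp [rowOffset]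
  have hro2 : rowOffset (a :: b :: c :: r) 2 = a + b := by simp [rowOffset]
  have hsum : (a :: b :: c :: r).sum = a + b + c + r.sum := by simp; omega
  -- the common shape of the two inclusions
  have hsub : ∀ nu, IsPartition nu → InSupportOv (a :: b :: c :: r) ov2 nu →
      DomLE (a :: b :: c :: r) nu ∧
        DomLE nu [(a :: b :: c :: r).sum - 2, 2] := by
    rintro nu hnu ⟨w, hr, hy, hc⟩
    have hd := dom_of_supp hr hy hc
    have o1 := hr.2.2 0 (by simp) (by simp [ov2])
    have o2 := hr.2.2 1 (by simp) (by simp [ov2])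
    simp only [zero_add, Nat.reduceAdd, hro1, hro2] at o1 o2
    have hlen := hr.1
    have p1 := ne_zero_of hc.2 (k := a - 1) (by omega)
    have p2 := ne_zero_of hc.2 (k := a + b - 1) (by omega)
    have hcnt := count_one_le w a (a + b) (by omega) (by omega) (by omega) (by omega)
    have h0 : w.count 1 = nu.getD 0 0 := hc.1 0
    refine ⟨hd, ?_, ?_⟩
    · rw [← hd.1]; simp; omega
    · have hds := hd.1
      rintro (_ | _ | i)
      · simp
      · rw [sum_take_getD]; simp only [zero_add, Finset.sum_range_one, ← h0]
        simp only [List.take_succ_cons, List.take_zero, List.sum_singleton]; omega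
      · have := rowOffset_le_sum nu (i + 2)
        unfold rowOffset at this
        change (nu.take (i + 2)).sum ≤ _
        simp only [List.take_succ_cons, List.take_nil, List.sum_cons, List.sum_nil]; simp only [List.sum_cons] at *; omega
  have hset : FullSupport (a :: b :: c :: r)
      ([2, 1] ++ List.replicate ((a :: b :: c :: r).length - 2) 0) ↔
      ∀ nu, IsPartition nu → (InSupportOv (a :: b :: c :: r) ov2 nu ↔
        DomLE (a :: b :: c :: r) nu ∧ DomLE nu [(a :: b :: c :: r).sum - 2, 2]) := by
    unfold FullSupport SupportSet IntervalSet InSupport InInterval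
    rw [ovOf_eq, Set.ext_iff]
    simp only [Set.mem_ofPred_eq, List.cons_append, List.getD_cons_zero, and_congr_right_iff]
  rw [hset]
  constructor
  · intro H
    by_contra hcon
    have hS : b + c + r.sum ≤ a := by simp at hcon; omega
    have hpart : IsPartition [a, b + c + r.sum] := by
      refine ⟨by simpa using hS, ?_⟩
      intro x hx
      simp at hx
      omega
    obtain ⟨w, hr, hy, hc⟩ := (H _ hpart).2 (by
      refine ⟨⟨by simp; omega, ?_⟩, ⟨by simp; omega, ?_⟩⟩
      · rintro (_ | _ | i)
        · simp
        · simp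
        · have := rowOffset_le_sum (a :: b :: c :: r) (i + 2)
          unfold rowOffset at this
          rw [hsum] at this
          simp only [List.take_succ_cons, List.take_nil, List.sum_cons, List.sum_nil] at this ⊢
          omega
      · rintro (_ | _ | i)
        · simp
        · simp; omega
        · simp; omega)
    have o2 := hr.2.2 1 (by simp) (by simp [ov2])
    simp only [Nat.reduceAdd, hro2] at o2
    have hlen := hr.1
    have h1 : w.count 1 = a := by simpa using hc.1 0
    have t1 := length_eq_sum_count _ 1 (take_letters hr hy hc.2 1)
    rw [hro1, List.length_take] at t1
    simp at t1
    have e3 : w.count 1 = (w.take a).count 1 + (w.drop a).count 1 := by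
      rw [← List.count_append, List.take_append_drop]
    have e4 : (w.drop a).count 1 = 0 := by omega
    rw [List.count_eq_zero] at e4
    have lt2 : w.getD (a + b) 0 ≤ 2 := by
      by_contra hgt
      obtain ⟨y, hy'⟩ : ∃ y, w.getD (a + b) 0 = y + 2 + 1 :=
        ⟨w.getD (a + b) 0 - 3, by omega⟩
      have := hc.1 (y + 2)
      simp at this
      rw [List.count_eq_zero] at this
      apply this
      rw [← hy', List.getD_eq_getElem _ _ (by omega)]
      exact List.getElem_mem _
    have p2 := ne_zero_of hc.2 (k := a + b - 1) (by omega)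
    apply e4
    rw [List.mem_drop_iff_getElem]
    refine ⟨b - 1, by omega, ?_⟩
    have : w.getD (a + b - 1) 0 = 1 := by omega
    rw [List.getD_eq_getElem _ _ (by omega)] at this
    refine Eq.trans ?_ this
    congr 1
    omega
  · intro hlt nu hnu
    refine ⟨hsub nu hnu, ?_⟩
    rintro ⟨hd1, hd2⟩
    have hlt' : a < b + c + r.sum := by simp at hlt; omega
    have hanti : ∀ i, nu.getD (i + 1) 0 ≤ nu.getD i 0 := by
      intro i
      by_cases h : i + 1 < nu.length
      · rw [List.getD_eq_getElem _ _ h, List.getD_eq_getElem _ _ (by omega)]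
        exact List.pairwise_iff_getElem.1 hnu.1 _ _ _ _ (by omega)
      · rw [List.getD_eq_default (l := nu) (n := i + 1) (hn := by omega)]; omega
    have hdom := hd1.2
    have hs := hd1.1
    have hL : (nu.take (a :: b :: c :: r).length).sum = (a :: b :: c :: r).sum := by
      have t1 := hdom (a :: b :: c :: r).length
      rw [List.take_length] at t1
      have t2 := rowOffset_le_sum nu (a :: b :: c :: r).length
      unfold rowOffset at t2
      omega
    have hdomf : ∀ i, ((a :: b :: c :: r).take i).sum ≤
        ∑ j ∈ Finset.range i, nu.getD j 0 := by
      intro i; rw [← sum_take_getD]; exact hdom i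
    have hz : ∀ j, (a :: b :: c :: r).length ≤ j → nu.getD j 0 = 0 := by
      intro j hj
      have t1 := rowOffset_mono nu hj
      have t2 := rowOffset_succ nu j
      have t3 := rowOffset_le_sum nu (j + 1)
      unfold rowOffset at t1 t2 t3
      omega
    have h0 : nu.getD 0 0 + 2 ≤ (a :: b :: c :: r).sum := by
      have := hd2.2 1
      rw [sum_take_getD] at this
      simp only [Finset.sum_range_one, List.take_succ_cons, List.take_zero,
        List.sum_singleton] at this
      omega
    have h1 := hdomf 1
    simp only [List.take_succ_cons, List.take_zero, List.sum_singleton,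
      Finset.sum_range_one] at h1
    have hgood : Good (a :: b :: c :: r) (fun j => nu.getD j 0) := by
      refine ⟨hanti, hz, ?_, fun i _ => hdomf i, h0, ?_⟩
      · rw [← sum_take_getD, hL]
      · by_contra hcon
        simp only [List.getD_cons_zero] at hcon
        have hz2 : ∀ j, 2 ≤ j → nu.getD j 0 = 0 := by
          intro j hj
          have := (antitone_nat_of_succ_le (f := fun j => nu.getD j 0) hanti) hj
          simp only at this
          omega
        have : ∑ j ∈ Finset.range (a :: b :: c :: r).length, nu.getD j 0
            = ∑ j ∈ Finset.range 2, nu.getD j 0 := by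
          symm
          apply Finset.sum_subset (Finset.range_mono (by simp))
          intro j _ hj
          exact hz2 j (by simp at hj; omega)
        rw [← sum_take_getD, hL, hsum] at this
        rw [Finset.sum_range_succ, Finset.sum_range_one] at this
        have := hanti 0
        simp only [zero_add] at this
        omega
    obtain ⟨w, e1, e2, e3, e4⟩ := exists_word r.length _ (by simp) ha h2 _ hgood
    exact ⟨w, e1, e2, e3, e4⟩

end RibbonSupport
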